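/- arXiv:1205.3288 — 2 statements merged into one kernel-verified Lean document; each statement's English description precedes it below -/
import Mathlib

section
/- Let (X,d) be a compact metric space and f: X → ℝ a Lipschitz function. Then the function D⁺ is upper semicontinuous and the function D⁻ is lower semicontinuous on X × (0,∞). -/
open Filter Topology Set MeasureTheory
open scoped ENNReal NNReal

/-- Hopf-Lax semigroup: `Q_t f (x) = inf_y ( f y + d(x,y)^2 / (2t) )`, with `Q_0 f = f`. -/
noncomputable def HL {X : Type*} [MetricSpace X] (f : X → ℝ) (t : ℝ) (x : X) : ℝ :=
  if t = 0 then f x else ⨅ y : X, (f y + dist x y ^ 2 / (2 * t))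

/-- The set of minimizers of `y ↦ f y + d(x,y)^2/(2t)`. -/
def minSet {X : Type*} [MetricSpace X] (f : X → ℝ) (t : ℝ) (x : X) : Set X :=
  {y | ∀ z : X, f y + dist x y ^ 2 / (2 * t) ≤ f z + dist x z ^ 2 / (2 * t)}

/-- `D⁺(x,t)`: the largest distance from `x` to a minimizer of `y ↦ f y + d(x,y)^2/(2t)`,
with `D⁺(x,0) = 0`. -/
noncomputable def Dplus {X : Type*} [MetricSpace X] (f : X → ℝ) (x : X) (t : ℝ) : ℝ :=
  if t = 0 then 0 else sSup (dist x '' minSet f t x)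

/-- `D⁻(x,t)`: the smallest distance from `x` to a minimizer of `y ↦ f y + d(x,y)^2/(2t)`,
with `D⁻(x,0) = 0`. -/
noncomputable def Dminus {X : Type*} [MetricSpace X] (f : X → ℝ) (x : X) (t : ℝ) : ℝ :=
  if t = 0 then 0 else sInf (dist x '' minSet f t x)

lemma minSet_nonempty {X : Type*} [MetricSpace X] [CompactSpace X] [Nonempty X]
    {f : X → ℝ} (hf : Continuous f) (t : ℝ) (x : X) : (minSet f t x).Nonempty := by
  have hF : Continuous fun y => f y + dist x y ^ 2 / (2 * t) := by fun_prop
  obtain ⟨y, -, hy⟩ := isCompact_univ.exists_isMinOn univ_nonempty hF.continuousOn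
  exact ⟨y, fun z => hy (mem_univ z)⟩

lemma isCompact_minSet {X : Type*} [MetricSpace X] [CompactSpace X]
    {f : X → ℝ} (hf : Continuous f) (t : ℝ) (x : X) : IsCompact (minSet f t x) := by
  refine IsClosed.isCompact ?_
  simp only [minSet, ofPred_forall]
  exact isClosed_iInter fun z => isClosed_le (by fun_prop) continuous_const

lemma isCompact_dist_image_minSet {X : Type*} [MetricSpace X] [CompactSpace X]
    {f : X → ℝ} (hf : Continuous f) (t : ℝ) (x : X) : IsCompact (dist x '' minSet f t x) :=
  (isCompact_minSet hf t x).image (by fun_prop)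

/-- Upper hemicontinuity of the minimizer correspondence: a property that holds near every
minimizer at `p` holds at all minimizers for parameters near `p`. -/
lemma eventually_forall_mem_minSet {X : Type*} [MetricSpace X] [CompactSpace X]
    {f : X → ℝ} (hf : Continuous f) {p : X × ℝ} (hp : p.2 ≠ 0) {P : X × ℝ → X → Prop}
    (h : ∀ y ∈ minSet f p.2 p.1, ∀ᶠ q : (X × ℝ) × X in 𝓝 (p, y), P q.1 q.2) :
    ∀ᶠ q in 𝓝 p, ∀ y ∈ minSet f q.2 q.1, P q y := by
  have key : ∀ᶠ q in 𝓝 p, ∀ y ∈ (univ : Set X), y ∈ minSet f q.2 q.1 → P q y := by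
    refine isCompact_univ.eventually_forall_of_forall_eventually fun y _ => ?_
    by_cases hy : y ∈ minSet f p.2 p.1
    · exact (h y hy).mono fun q hq _ => hq
    · simp only [minSet, mem_ofPred_eq, not_forall, not_le] at hy
      obtain ⟨z, hz⟩ := hy
      have hp' : 2 * p.2 ≠ 0 := mul_ne_zero two_ne_zero hp
      have hl : ContinuousAt
          (fun q : (X × ℝ) × X => f z + dist q.1.1 z ^ 2 / (2 * q.1.2)) (p, y) :=
        continuousAt_const.add (ContinuousAt.div (by fun_prop) (by fun_prop) hp')
      have hr : ContinuousAt
          (fun q : (X × ℝ) × X => f q.2 + dist q.1.1 q.2 ^ 2 / (2 * q.1.2)) (p, y) :=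
        ContinuousAt.add (by fun_prop) (ContinuousAt.div (by fun_prop) (by fun_prop) hp')
      exact (hl.eventually_lt hr hz).mono fun q hq hmem => absurd (hmem z) (not_le.2 hq)
  exact key.mono fun q hq y => hq y (mem_univ y)

/-- **Semicontinuity of `D±`** (Proposition 3.2): for a Lipschitz `f` on a compact metric
space, `D⁺` is upper semicontinuous and `D⁻` is lower semicontinuous on `X × (0,∞)`. -/
theorem stmt1 {X : Type*} [MetricSpace X] [CompactSpace X] [Nonempty X]
    (f : X → ℝ) (hf : ∃ K : ℝ≥0, LipschitzWith K f) :
    UpperSemicontinuousOn (fun p : X × ℝ => Dplus f p.1 p.2) {p : X × ℝ | 0 < p.2} ∧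
    LowerSemicontinuousOn (fun p : X × ℝ => Dminus f p.1 p.2) {p : X × ℝ | 0 < p.2} := by
  obtain ⟨K, hK⟩ := hf
  have hc := hK.continuous
  refine ⟨fun p hp c hlt => ?_, fun p hp c hlt => ?_⟩
  · have hp0 : p.2 ≠ 0 := ne_of_gt hp
    simp only [Dplus, if_neg hp0] at hlt
    have hev := eventually_forall_mem_minSet hc hp0 (P := fun q y => dist q.1 y < c)
      fun y hy => ContinuousAt.eventually_lt (by fun_prop) continuousAt_const
        ((le_csSup (isCompact_dist_image_minSet hc p.2 p.1).bddAbove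
          (mem_image_of_mem _ hy)).trans_lt hlt)
    filter_upwards [nhdsWithin_le_nhds hev, self_mem_nhdsWithin] with q hq hq0
    simp only [Dplus, if_neg (ne_of_gt hq0)]
    obtain ⟨y, hy, hyq⟩ := (isCompact_dist_image_minSet hc q.2 q.1).sSup_mem
      ((minSet_nonempty hc q.2 q.1).image _)
    exact hyq ▸ hq y hy
  · have hp0 : p.2 ≠ 0 := ne_of_gt hp
    simp only [Dminus, if_neg hp0] at hlt
    have hev := eventually_forall_mem_minSet hc hp0 (P := fun q y => c < dist q.1 y)
      fun y hy => ContinuousAt.eventually_lt continuousAt_const (by fun_prop)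
        (hlt.trans_le (csInf_le (isCompact_dist_image_minSet hc p.2 p.1).bddBelow
          (mem_image_of_mem _ hy)))
    filter_upwards [nhdsWithin_le_nhds hev, self_mem_nhdsWithin] with q hq hq0
    simp only [Dminus, if_neg (ne_of_gt hq0)]
    obtain ⟨y, hy, hyq⟩ := (isCompact_dist_image_minSet hc q.2 q.1).sInf_mem
      ((minSet_nonempty hc q.2 q.1).image _)
    exact hyq ▸ hq y hy
end

section
/- Let (X,d,m) be a compact normalized metric measure space and let γ ∈ P(X×X) have bounded deformation, i.e. c·m ≤ π¹_♯γ ≤ C·m and c·m ≤ π²_♯γ ≤ C·m for some constants 0 < c ≤ C < ∞. Then γ_♯μ ∈ D(Ent_m) for every μ ∈ D(Ent_m), and the map μ ↦ Ent_m(μ) − Ent_m(γ_♯μ) is convex on D(Ent_m) with respect to linear interpolation of measures: for all μ₀, μ₁ ∈ D(Ent_m) and t ∈ [0,1], with μ_t := (1−t)μ₀ + tμ₁, one has Ent_m(μ_t) − Ent_m(γ_♯μ_t) ≤ (1−t)(Ent_m(μ₀) − Ent_m(γ_♯μ₀)) + t(Ent_m(μ₁) − Ent_m(γ_♯μ₁)).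 -/
open Filter Topology Set MeasureTheory
open scoped ENNReal NNReal

/-- The nonnegative integrand `z log z - z + 1 ≥ 0` used to define the relative entropy:
for probability measures `ρ = f·σ` one has `∫ (f log f - f + 1) dσ = ∫ f log f dσ`. -/
noncomputable def entFun (z : ℝ) : ℝ := z * Real.log z - z + 1

open scoped Classical in
/-- The relative entropy `Ent_σ(ρ) = ∫ f log f dσ` if `ρ = f·σ ≪ σ`, and `+∞` otherwise
(for probability measures `ρ, σ` this agrees with `∫⁻ (f log f - f + 1) dσ ∈ [0,∞]`). -/
noncomputable def Ent {X : Type*} [MeasurableSpace X]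
    (σ ρ : MeasureTheory.Measure X) : ℝ≥0∞ :=
  if ρ ≪ σ then ∫⁻ x, ENNReal.ofReal (entFun ((ρ.rnDeriv σ x).toReal)) ∂σ else ⊤

/-- Push-forward of `μ` via the plan `γ` (Definition 5.3):
`γ_♯μ := π²_♯ γ_μ`, where `dγ_μ(x,y) = (dμ/d(π¹_♯γ))(x) dγ(x,y)`. -/
noncomputable def planPush {X : Type*} [MeasurableSpace X]
    (γ : MeasureTheory.Measure (X × X)) (μ : MeasureTheory.Measure X) :
    MeasureTheory.Measure X :=
  (γ.withDensity (fun p => μ.rnDeriv (γ.map Prod.fst) p.1)).map Prod.snd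

open ProbabilityTheory InformationTheory

theorem ent_eq_klDiv {X : Type*} [MeasurableSpace X] (σ ρ : Measure X) [IsFiniteMeasure σ]
    [IsFiniteMeasure ρ] : Ent σ ρ = klDiv ρ σ := by
  rw [klDiv_eq_lintegral_klFun, Ent]
  have h (z : ℝ) : entFun z = klFun z := by rw [entFun, klFun_apply]; ring
  simp only [h]

/-- A plan pushes measures forward through its conditional kernel given the first coordinate. -/
theorem planPush_eq_condKernel_comp {X : Type*} [MeasurableSpace X] [StandardBorelSpace X]
    [Nonempty X] (γ : Measure (X × X)) [IsFiniteMeasure γ] {μ : Measure X} [SigmaFinite μ]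
    (hμ : μ ≪ γ.map Prod.fst) : planPush γ μ = γ.condKernel ∘ₘ μ := by
  change μ ≪ γ.fst at hμ
  ext s hs
  have hf : Measurable (μ.rnDeriv γ.fst) := Measure.measurable_rnDeriv _ _
  have hk : Measurable fun x => γ.condKernel x s := Kernel.measurable_coe _ hs
  have hg : Measurable ((Prod.snd ⁻¹' s).indicator
      fun p : X × X => μ.rnDeriv γ.fst p.1) :=
    (hf.comp measurable_fst).indicator (measurable_snd hs)
  rw [planPush, Measure.map_apply measurable_snd hs,
    withDensity_apply _ (measurable_snd hs), Measure.bind_apply hs γ.condKernel.aemeasurable,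
    ← lintegral_rnDeriv_mul hμ hk.aemeasurable, ← lintegral_indicator (measurable_snd hs)]
  refine Eq.trans ?_ ((Measure.lintegral_compProd (μ := γ.fst) (κ := γ.condKernel) hg).trans ?_)
  · rw [γ.disintegrate]
    rfl
  refine lintegral_congr fun x => ?_
  rw [← lintegral_indicator_const hs]
  rfl

theorem condKernel_comp_fst {X Y : Type*} [MeasurableSpace X] [MeasurableSpace Y]
    [StandardBorelSpace Y] [Nonempty Y] (γ : Measure (X × Y)) [IsFiniteMeasure γ] :
    γ.condKernel ∘ₘ γ.fst = γ.snd := by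
  rw [← Measure.snd_compProd, γ.disintegrate]

theorem klFun_mixture {a b r s h : ℝ} (hab : a + b = 1) (hh : h = a * (r * h) + b * (s * h)) :
    a * klFun (r * h) + b * klFun (s * h)
      = klFun h + (a * (h * klFun r) + b * (h * klFun s)) := by
  have key (z : ℝ) :
      klFun (z * h) = h * klFun z + z * h * Real.log h + 1 - h := by
    simp only [klFun_apply]
    rcases eq_or_ne h 0 with rfl | hh0
    · simp
    rcases eq_or_ne z 0 with rfl | hz
    · simp
    rw [Real.log_mul hz hh0]
    ring
  rw [key r, key s, klFun_apply h]
  linear_combination (-Real.log h) * hh + (1 - h) * hab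

/-- The compensation identity: the average divergence of two measures from `m` splits into the
divergence of their mixture and the average divergence from the mixture. -/
theorem klDiv_mixture {X : Type*} [MeasurableSpace X] {m μ ν : Measure X}
    [IsFiniteMeasure m] [IsFiniteMeasure μ] [IsFiniteMeasure ν] (hμ : μ ≪ m) (hν : ν ≪ m)
    {a b : ℝ≥0} (ha : a ≠ 0) (hb : b ≠ 0) (hab : a + b = 1) :
    a * klDiv μ m + b * klDiv ν m
      = klDiv (a • μ + b • ν) m
        + (a * klDiv μ (a • μ + b • ν) + b * klDiv ν (a • μ + b • ν)) := by
  set M := a • μ + b • ν with hM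
  have hMm : M ≪ m := (hμ.smul_left a).add_left (hν.smul_left b)
  have hμM : μ ≪ M :=
    (Measure.absolutelyContinuous_smul (ENNReal.coe_ne_zero.2 ha)).trans
      (Measure.le_add_right le_rfl).absolutelyContinuous
  have hνM : ν ≪ M :=
    (Measure.absolutelyContinuous_smul (ENNReal.coe_ne_zero.2 hb)).trans
      (Measure.le_add_left le_rfl).absolutelyContinuous
  have meas (ρ σ : Measure X) :
      Measurable fun x => ENNReal.ofReal (klFun (ρ.rnDeriv σ x).toReal) :=
    (measurable_klFun.comp (Measure.measurable_rnDeriv ρ σ).ennreal_toReal).ennreal_ofReal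
  have measM (ρ : Measure X) :
      Measurable fun x => M.rnDeriv m x * ENNReal.ofReal (klFun (ρ.rnDeriv M x).toReal) :=
    (Measure.measurable_rnDeriv M m).mul (meas ρ M)
  rw [klDiv_eq_lintegral_klFun_of_ac hμ, klDiv_eq_lintegral_klFun_of_ac hν,
    klDiv_eq_lintegral_klFun_of_ac hMm, klDiv_eq_lintegral_klFun_of_ac hμM,
    klDiv_eq_lintegral_klFun_of_ac hνM,
    ← lintegral_rnDeriv_mul hMm (meas μ M).aemeasurable,
    ← lintegral_rnDeriv_mul hMm (meas ν M).aemeasurable,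
    ← lintegral_const_mul _ (meas μ m), ← lintegral_const_mul _ (meas ν m),
    ← lintegral_const_mul _ (measM μ), ← lintegral_const_mul _ (measM ν),
    ← lintegral_add_left ((meas μ m).const_mul _),
    ← lintegral_add_left ((measM μ).const_mul _), ← lintegral_add_left (meas M m)]
  refine lintegral_congr_ae ?_
  filter_upwards [Measure.rnDeriv_mul_rnDeriv (κ := m) hμM,
    Measure.rnDeriv_mul_rnDeriv (κ := m) hνM, Measure.rnDeriv_add (a • μ) (b • ν) m,
    Measure.rnDeriv_smul_left μ m a, Measure.rnDeriv_smul_left ν m b,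
    Measure.rnDeriv_ne_top μ m, Measure.rnDeriv_ne_top ν m, Measure.rnDeriv_ne_top M m]
    with x h₁ h₂ h₃ h₄ h₅ h₆ h₇ h₈
  rw [← hM, Pi.add_apply, h₄, h₅, Pi.smul_apply, Pi.smul_apply, ENNReal.smul_def,
    ENNReal.smul_def, smul_eq_mul, smul_eq_mul] at h₃
  have h₃' := congrArg ENNReal.toReal h₃
  rw [ENNReal.toReal_add (by finiteness) (by finiteness)] at h₃'
  rw [← h₁, ← h₂] at h₃'
  simp only [Pi.mul_apply, ENNReal.toReal_mul, ENNReal.coe_toReal] at h₃'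
  rw [← h₁, ← h₂]
  simp only [Pi.mul_apply, ENNReal.toReal_mul]
  have hab' : (a : ℝ) + b = 1 := by exact_mod_cast hab
  have key := klFun_mixture hab' h₃'
  have pos {z : ℝ} (hz : 0 ≤ z) : 0 ≤ klFun z := klFun_nonneg hz
  rw [← ENNReal.ofReal_toReal h₈, ← ENNReal.ofReal_coe_nnreal (p := a),
    ← ENNReal.ofReal_coe_nnreal (p := b), ENNReal.toReal_ofReal ENNReal.toReal_nonneg]
  have q₁ := pos (ENNReal.toReal_nonneg (a := μ.rnDeriv M x))
  have q₂ := pos (ENNReal.toReal_nonneg (a := ν.rnDeriv M x))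
  have q₃ := pos (ENNReal.toReal_nonneg (a := M.rnDeriv m x))
  have q₄ := pos (mul_nonneg (ENNReal.toReal_nonneg (a := μ.rnDeriv M x))
    (ENNReal.toReal_nonneg (a := M.rnDeriv m x)))
  have q₅ := pos (mul_nonneg (ENNReal.toReal_nonneg (a := ν.rnDeriv M x))
    (ENNReal.toReal_nonneg (a := M.rnDeriv m x)))
  rw [← ENNReal.ofReal_mul (by positivity), ← ENNReal.ofReal_mul (by positivity),
    ← ENNReal.ofReal_mul (by positivity), ← ENNReal.ofReal_mul (by positivity),
    ← ENNReal.ofReal_mul (by positivity), ← ENNReal.ofReal_mul (by positivity),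
    ← ENNReal.ofReal_add (by positivity) (by positivity),
    ← ENNReal.ofReal_add (by positivity) (by positivity),
    ← ENNReal.ofReal_add (by positivity) (by positivity), key]

/-- The entropy gain under a Markov kernel is convex along mixtures. -/
theorem klDiv_mixture_add_comp_le {X Y : Type*} [MeasurableSpace X] [MeasurableSpace Y]
    {m μ ν : Measure X} {n : Measure Y} [IsFiniteMeasure m] [IsFiniteMeasure n]
    [IsFiniteMeasure μ] [IsFiniteMeasure ν] (κ : Kernel X Y) [IsMarkovKernel κ]
    (hμ : μ ≪ m) (hν : ν ≪ m) (hκμ : κ ∘ₘ μ ≪ n) (hκν : κ ∘ₘ ν ≪ n)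
    {a b : ℝ≥0} (ha : a ≠ 0) (hb : b ≠ 0) (hab : a + b = 1) :
    klDiv (a • μ + b • ν) m + (a * klDiv (κ ∘ₘ μ) n + b * klDiv (κ ∘ₘ ν) n)
      ≤ (a * klDiv μ m + b * klDiv ν m) + klDiv (κ ∘ₘ (a • μ + b • ν)) n := by
  have hlin : κ ∘ₘ (a • μ + b • ν) = a • (κ ∘ₘ μ) + b • (κ ∘ₘ ν) := by
    rw [Measure.comp_add]
    exact congrArg₂ _ (Measure.comp_smul _) (Measure.comp_smul _)
  rw [klDiv_mixture hκμ hκν ha hb hab, klDiv_mixture hμ hν ha hb hab, ← hlin, add_assoc,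
    add_comm (klDiv (κ ∘ₘ (a • μ + b • ν)) n)]
  gcongr <;> exact klDiv_comp_right_le _ _ κ

theorem rnDeriv_le_of_le_smul {X : Type*} [MeasurableSpace X] {μ ν : Measure X}
    [SigmaFinite ν] {C : ℝ≥0∞} (h : μ ≤ C • ν) : ∀ᵐ x ∂ν, μ.rnDeriv ν x ≤ C := by
  refine ae_le_of_forall_setLIntegral_le_of_sigmaFinite₀
    (Measure.measurable_rnDeriv μ ν).aemeasurable fun s _ _ => ?_
  rw [setLIntegral_const]
  exact (Measure.setLIntegral_rnDeriv_le s).trans (h s)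

/-- Finiteness of the divergence only depends on the reference measure up to bounded densities. -/
theorem klDiv_ne_top_of_le_smul {X : Type*} [MeasurableSpace X] {μ ν σ : Measure X}
    [IsFiniteMeasure μ] [IsFiniteMeasure ν] [IsFiniteMeasure σ] {C K : ℝ≥0∞} (hC : C ≠ ⊤)
    (hK : K ≠ ⊤) (hσν : σ ≤ C • ν) (hνσ : ν ≤ K • σ) (h : klDiv μ ν ≠ ⊤) :
    klDiv μ σ ≠ ⊤ := by
  obtain ⟨hμν, hint⟩ := klDiv_ne_top_iff.1 h
  have hνσ' : ν ≪ σ := Measure.absolutelyContinuous_of_le_smul hνσ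
  have hμσ := hμν.trans hνσ'
  refine klDiv_ne_top hμσ ?_
  have hbdd : ∀ᵐ x ∂μ, ‖llr ν σ x‖ ≤ max (Real.log K.toReal) (Real.log C.toReal) := by
    filter_upwards [hμσ.ae_le (rnDeriv_le_of_le_smul hνσ), hμν.ae_le (rnDeriv_le_of_le_smul hσν),
      hμν.ae_le (Measure.inv_rnDeriv hνσ'), hμν.ae_le (Measure.rnDeriv_pos hνσ'),
      hμσ.ae_le (Measure.rnDeriv_ne_top ν σ)] with x h₁ h₂ h₃ h₄ h₅
    have hpos := ENNReal.toReal_pos h₄.ne' h₅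
    rw [← h₃, Pi.inv_apply] at h₂
    have h₂' := ENNReal.toReal_mono hC h₂
    rw [ENNReal.toReal_inv] at h₂'
    have l₁ := Real.log_le_log hpos (ENNReal.toReal_mono hK h₁)
    have l₂ := Real.log_le_log (inv_pos.2 hpos) h₂'
    rw [Real.log_inv] at l₂
    rw [llr_def, Real.norm_eq_abs, abs_le']
    exact ⟨l₁.trans (le_max_left _ _), l₂.trans (le_max_right _ _)⟩
  refine (hint.add (Integrable.of_bound (measurable_llr ν σ).aestronglyMeasurable _ hbdd)).congr ?_
  filter_upwards [hμσ.ae_le (Measure.rnDeriv_mul_rnDeriv (κ := σ) hμν), Measure.rnDeriv_pos hμν,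
    hμν.ae_le (Measure.rnDeriv_ne_top μ ν), hμν.ae_le (Measure.rnDeriv_pos hνσ'),
    hμσ.ae_le (Measure.rnDeriv_ne_top ν σ)] with x h₁ h₂ h₃ h₄ h₅
  simp only [Pi.add_apply, llr_def]
  rw [← h₁, Pi.mul_apply, ENNReal.toReal_mul,
    Real.log_mul (ENNReal.toReal_pos h₂.ne' h₃).ne' (ENNReal.toReal_pos h₄.ne' h₅).ne']

theorem measure_le_inv_smul_of_smul_le {X : Type*} [MeasurableSpace X] {μ ν : Measure X}
    {c : ℝ≥0∞} (hc : c ≠ 0) (hc' : c ≠ ⊤) (h : c • μ ≤ ν) : μ ≤ c⁻¹ • ν := by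
  refine Measure.le_iff'.2 fun s => ?_
  have hs := h s
  simp only [Measure.smul_apply, smul_eq_mul] at hs ⊢
  calc μ s = c⁻¹ * (c * μ s) := by rw [← mul_assoc, ENNReal.inv_mul_cancel hc hc', one_mul]
    _ ≤ c⁻¹ * ν s := by gcongr

/-- **Plans with bounded deformation preserve the entropy domain, and entropy gain is
convex** (Proposition 5.4(ii),(iii)): if `c·m ≤ πⁱ_♯γ ≤ C·m` (`i = 1,2`), then
`γ_♯μ ∈ D(Ent_m)` for all `μ ∈ D(Ent_m)`, and `μ ↦ Ent_m(μ) - Ent_m(γ_♯μ)` is convex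
w.r.t. linear interpolation of measures (stated with the finite subtracted terms moved to
the other side of the inequality). -/
theorem stmt18 {X : Type*} [MetricSpace X] [CompactSpace X] [Nonempty X]
    [MeasurableSpace X] [BorelSpace X]
    (m : Measure X) [IsProbabilityMeasure m]
    (γ : Measure (X × X)) [IsProbabilityMeasure γ]
    (c C : ℝ≥0∞) (hc : 0 < c) (hC : C < ⊤)
    (h1 : c • m ≤ γ.map Prod.fst) (h2 : γ.map Prod.fst ≤ C • m)
    (h3 : c • m ≤ γ.map Prod.snd) (h4 : γ.map Prod.snd ≤ C • m) :
    (∀ μ : Measure X, IsProbabilityMeasure μ → Ent m μ < ⊤ → Ent m (planPush γ μ) < ⊤) ∧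
    (∀ μ₀ μ₁ : Measure X, IsProbabilityMeasure μ₀ → IsProbabilityMeasure μ₁ →
      Ent m μ₀ < ⊤ → Ent m μ₁ < ⊤ → ∀ t : ℝ, 0 ≤ t → t ≤ 1 →
      Ent m (ENNReal.ofReal (1 - t) • μ₀ + ENNReal.ofReal t • μ₁) +
          (ENNReal.ofReal (1 - t) * Ent m (planPush γ μ₀) +
            ENNReal.ofReal t * Ent m (planPush γ μ₁)) ≤
        (ENNReal.ofReal (1 - t) * Ent m μ₀ + ENNReal.ofReal t * Ent m μ₁) +
          Ent m (planPush γ (ENNReal.ofReal (1 - t) • μ₀ + ENNReal.ofReal t • μ₁))) := by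
  have hc' : c ≠ ⊤ := by
    have h := h1 univ
    rw [Measure.smul_apply, measure_univ, smul_eq_mul, mul_one] at h
    exact ne_top_of_le_ne_top (measure_ne_top _ _) h
  have k1 := measure_le_inv_smul_of_smul_le hc.ne' hc' h1
  have k3 := measure_le_inv_smul_of_smul_le hc.ne' hc' h3
  have hinv : c⁻¹ ≠ ⊤ := ENNReal.inv_ne_top.2 hc.ne'
  have ac1 : m ≪ γ.map Prod.fst := Measure.absolutelyContinuous_of_le_smul k1
  have ac4 : γ.map Prod.snd ≪ m := Measure.absolutelyContinuous_of_le_smul h4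
  have hac (μ : Measure X) [IsFiniteMeasure μ] (h : Ent m μ < ⊤) : μ ≪ m :=
    (klDiv_ne_top_iff.1 (ent_eq_klDiv m μ ▸ h.ne)).1
  have hpush (μ : Measure X) [IsFiniteMeasure μ] (h : μ ≪ m) :
      γ.condKernel ∘ₘ μ ≪ m := by
    refine Measure.AbsolutelyContinuous.trans ?_ ac4
    change _ ≪ γ.snd
    rw [← condKernel_comp_fst γ]
    exact (h.trans ac1).comp_right _
  constructor
  · intro μ _ hμ
    have hμm := hac μ hμ
    rw [planPush_eq_condKernel_comp γ (hμm.trans ac1), ent_eq_klDiv, lt_top_iff_ne_top]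
    rw [ent_eq_klDiv] at hμ
    refine klDiv_ne_top_of_le_smul (ν := γ.snd) hinv hC.ne k3 h4 ?_
    rw [← condKernel_comp_fst γ]
    exact ne_top_of_le_ne_top (klDiv_ne_top_of_le_smul (σ := γ.fst) hC.ne hinv h2 k1 hμ.ne)
      (klDiv_comp_right_le μ γ.fst γ.condKernel)
  · intro μ₀ μ₁ _ _ hμ₀ hμ₁ t ht0 ht1
    rcases ht0.eq_or_lt with rfl | ht0
    · simp
    rcases ht1.eq_or_lt with rfl | ht1
    · simp
    have hm₀ := hac μ₀ hμ₀
    have hm₁ := hac μ₁ hμ₁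
    change Ent m ((1 - t).toNNReal • μ₀ + t.toNNReal • μ₁) + _ ≤
      _ + Ent m (planPush γ ((1 - t).toNNReal • μ₀ + t.toNNReal • μ₁))
    have hM : (1 - t).toNNReal • μ₀ + t.toNNReal • μ₁ ≪ m :=
      (hm₀.smul_left _).add_left (hm₁.smul_left _)
    rw [planPush_eq_condKernel_comp γ (hm₀.trans ac1),
      planPush_eq_condKernel_comp γ (hm₁.trans ac1),
      planPush_eq_condKernel_comp γ (hM.trans ac1)]
    simp only [ent_eq_klDiv]
    refine klDiv_mixture_add_comp_le γ.condKernel hm₀ hm₁ (hpush μ₀ hm₀) (hpush μ₁ hm₁)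
      (Real.toNNReal_pos.2 (sub_pos.2 ht1)).ne' (Real.toNNReal_pos.2 ht0).ne' ?_
    rw [← Real.toNNReal_add (sub_nonneg.2 ht1.le) ht0.le, sub_add_cancel, Real.toNNReal_one]
end
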